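/- Let F : ℝ^d → ℝ be differentiable with L-Lipschitz gradient, let M ∈ {0,1}^d be a binary mask, let (Ω, μ) be a probability space, and let g : Ω × ℝ^d → ℝ^d satisfy 𝔼_{x∼μ}[g(x, W)] = ∇F(W) and 𝔼_{x∼μ}[‖g(x, W) − ∇F(W)‖²] ≤ σ² for all W. For a masked SGD step W' = W − α · g(x, W) ⊙ M with step size α > 0 and x ∼ μ, the expected loss satisfies 𝔼[F(W')] ≤ F(W) − α‖∇F(W) ⊙ M‖² + (L·α²/2)·(‖∇F(W) ⊙ M‖² + σ²). -/

import Mathlib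

open MeasureTheory

noncomputable section

/-- Componentwise (Hadamard) product on `ℝ^d`. -/
def had {d : ℕ} (v w : EuclideanSpace ℝ (Fin d)) : EuclideanSpace ℝ (Fin d) :=
  WithLp.toLp 2 (fun i => v i * w i)

/-- A binary mask is a vector with entries in `{0,1}`. -/
def IsBinaryMask {d : ℕ} (M : EuclideanSpace ℝ (Fin d)) : Prop :=
  ∀ i, M i = 0 ∨ M i = 1

open scoped InnerProductSpace in
theorem descent_aux {d : ℕ} (F : EuclideanSpace ℝ (Fin d) → ℝ) (L : ℝ)
    (hdiff : Differentiable ℝ F)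
    (hLip : ∀ W h : EuclideanSpace ℝ (Fin d),
      ‖gradient F (W + h) - gradient F W‖ ≤ L * ‖h‖) (W h : EuclideanSpace ℝ (Fin d)) :
    F (W + h) ≤ F W + inner ℝ (gradient F W) h + L / 2 * ‖h‖ ^ 2 := by
  have hd : ∀ t : ℝ, HasDerivAt (fun t : ℝ => F (W + t • h) - t * inner ℝ (gradient F W) h
      - t ^ 2 * (L / 2 * ‖h‖ ^ 2))
      (inner ℝ (gradient F (W + t • h)) h - 1 * inner ℝ (gradient F W) h
        - (2 * t) * (L / 2 * ‖h‖ ^ 2)) t := by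
    intro t
    have h1 : HasFDerivAt F (InnerProductSpace.toDual ℝ _ (gradient F (W + t • h))) (W + t • h) :=
      (hdiff (W + t • h)).hasGradientAt.hasFDerivAt
    have h2 : HasDerivAt (fun t : ℝ => W + t • h) h t := by
      simpa using ((hasDerivAt_id t).smul_const h).const_add W
    have h3 := h1.comp_hasDerivAt t h2
    have h4 : HasDerivAt (fun t : ℝ => t ^ 2) (2 * t) t := by
      simpa using hasDerivAt_pow 2 t
    exact (h3.sub ((hasDerivAt_id t).mul_const _)).sub (h4.mul_const _)
  have hanti := antitoneOn_of_deriv_nonpos (convex_Icc (0 : ℝ) 1)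
    (fun t _ => (hd t).continuousAt.continuousWithinAt)
    (fun t _ => (hd t).differentiableAt.differentiableWithinAt)
    (by
      intro t ht
      rw [interior_Icc] at ht
      rw [(hd t).deriv]
      have h5 := real_inner_le_norm (gradient F (W + t • h) - gradient F W) h
      rw [inner_sub_left] at h5
      have h6 := hLip W (t • h)
      rw [norm_smul, Real.norm_of_nonneg ht.1.le] at h6
      have h7 := mul_le_mul_of_nonneg_right h6 (norm_nonneg h)
      nlinarith)
  have := hanti (show (0 : ℝ) ∈ Set.Icc (0 : ℝ) 1 by simp) (show (1 : ℝ) ∈ Set.Icc (0 : ℝ) 1 by simp)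
    zero_le_one
  simp only [one_smul, zero_smul, add_zero] at this
  linarith

theorem had_inner_aux {d : ℕ} (u v M : EuclideanSpace ℝ (Fin d)) :
    inner ℝ u (had v M) = inner ℝ (had u M) v := by
  simp only [PiLp.inner_apply, had]
  refine Finset.sum_congr rfl fun i _ => ?_
  simp
  ring

theorem had_had_aux {d : ℕ} (u M : EuclideanSpace ℝ (Fin d)) (hM : IsBinaryMask M) :
    had (had u M) M = had u M := by
  ext i
  rcases hM i with h | h <;> simp [had, h]

theorem had_norm_aux {d : ℕ} (u M : EuclideanSpace ℝ (Fin d)) (hM : IsBinaryMask M) :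
    ‖had u M‖ ^ 2 ≤ ‖u‖ ^ 2 := by
  rw [EuclideanSpace.norm_sq_eq, EuclideanSpace.norm_sq_eq]
  refine Finset.sum_le_sum fun i _ => ?_
  rcases hM i with h | h <;> simp [had, h, sq_nonneg]

theorem had_sub_aux {d : ℕ} (u v M : EuclideanSpace ℝ (Fin d)) :
    had (u - v) M = had u M - had v M := by
  ext i
  simp [had, sub_mul]

/-- Per-step descent estimate for masked stochastic gradient descent:
for the step `W' = W − α · g(x, W) ⊙ M` with `x ∼ μ`,
`𝔼[F(W')] ≤ F(W) − α‖∇F(W) ⊙ M‖² + (Lα²/2)(‖∇F(W) ⊙ M‖² + σ²)`. -/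
theorem stmt_4 {d : ℕ} (F : EuclideanSpace ℝ (Fin d) → ℝ) (L σ α : ℝ)
    (hL : 0 < L) (hα : 0 < α)
    (hdiff : Differentiable ℝ F)
    (hLip : ∀ W h : EuclideanSpace ℝ (Fin d),
      ‖gradient F (W + h) - gradient F W‖ ≤ L * ‖h‖)
    (M : EuclideanSpace ℝ (Fin d)) (hM : IsBinaryMask M)
    (Ω : Type) [MeasurableSpace Ω] (μ : Measure Ω) [IsProbabilityMeasure μ]
    (g : Ω → EuclideanSpace ℝ (Fin d) → EuclideanSpace ℝ (Fin d))
    (hgInt : ∀ W : EuclideanSpace ℝ (Fin d), Integrable (fun x => g x W) μ)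
    (hUnbiased : ∀ W : EuclideanSpace ℝ (Fin d), ∫ x, g x W ∂μ = gradient F W)
    (hNoiseInt : ∀ W : EuclideanSpace ℝ (Fin d),
      Integrable (fun x => ‖g x W - gradient F W‖ ^ 2) μ)
    (hNoise : ∀ W : EuclideanSpace ℝ (Fin d),
      ∫ x, ‖g x W - gradient F W‖ ^ 2 ∂μ ≤ σ ^ 2)
    (W : EuclideanSpace ℝ (Fin d))
    (hFInt : Integrable (fun x => F (W - α • had (g x W) M)) μ) :
    ∫ x, F (W - α • had (g x W) M) ∂μ ≤
      F W - α * ‖had (gradient F W) M‖ ^ 2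
        + (L * α ^ 2 / 2) * (‖had (gradient F W) M‖ ^ 2 + σ ^ 2) := by
  set G := gradient F W with hG
  set D := had G M with hD
  have hDD : inner ℝ D G = ‖D‖ ^ 2 := by
    rw [← real_inner_self_eq_norm_sq]
    nth_rewrite 3 [hD]
    rw [had_inner_aux, hD, had_had_aux _ _ hM]
  have hpt : ∀ x, F (W - α • had (g x W) M) ≤
      (F W + L * α ^ 2 / 2 * ‖D‖ ^ 2) - α * inner ℝ D (g x W)
        + L * α ^ 2 * inner ℝ D (g x W - G) + L * α ^ 2 / 2 * ‖g x W - G‖ ^ 2 := by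
    intro x
    have h1 := descent_aux F L hdiff hLip W (-(α • had (g x W) M))
    rw [← sub_eq_add_neg, norm_neg, norm_smul, inner_neg_right, inner_smul_right,
      had_inner_aux, ← hG, ← hD, mul_pow, Real.norm_eq_abs, sq_abs] at h1
    have h2 : had (g x W) M = D + had (g x W - G) M := by
      rw [had_sub_aux]; simp [hD]
    have h3 : ‖had (g x W) M‖ ^ 2 ≤ ‖D‖ ^ 2 + 2 * inner ℝ D (g x W - G) + ‖g x W - G‖ ^ 2 := by
      rw [h2, norm_add_sq_real, had_inner_aux, hD, had_had_aux _ _ hM]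
      have := had_norm_aux (g x W - G) M hM
      linarith
    have h4 := mul_le_mul_of_nonneg_left h3 (show 0 ≤ L * α ^ 2 / 2 by positivity)
    linarith
  have i1 : Integrable (fun x => α * inner ℝ D (g x W)) μ := ((hgInt W).const_inner D).const_mul α
  have hs : Integrable (fun x => g x W - G) μ := (hgInt W).sub (integrable_const G)
  have i2 : Integrable (fun x => L * α ^ 2 * inner ℝ D (g x W - G)) μ :=
    (hs.const_inner D).const_mul _
  have i3 : Integrable (fun x => L * α ^ 2 / 2 * ‖g x W - G‖ ^ 2) μ := (hNoiseInt W).const_mul _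
  have i0 : Integrable (fun _ : Ω => F W + L * α ^ 2 / 2 * ‖D‖ ^ 2) μ := integrable_const _
  have hle := integral_mono hFInt (((i0.sub i1).add i2).add i3) hpt
  have e : ∫ x, ((F W + L * α ^ 2 / 2 * ‖D‖ ^ 2) - α * inner ℝ D (g x W)
        + L * α ^ 2 * inner ℝ D (g x W - G) + L * α ^ 2 / 2 * ‖g x W - G‖ ^ 2) ∂μ
      = (F W + L * α ^ 2 / 2 * ‖D‖ ^ 2) - α * ‖D‖ ^ 2
        + L * α ^ 2 / 2 * ∫ x, ‖g x W - G‖ ^ 2 ∂μ := by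
    have j1 : Integrable (fun x => (F W + L * α ^ 2 / 2 * ‖D‖ ^ 2) - α * inner ℝ D (g x W)) μ :=
      i0.sub i1
    have j2 : Integrable (fun x => (F W + L * α ^ 2 / 2 * ‖D‖ ^ 2) - α * inner ℝ D (g x W)
        + L * α ^ 2 * inner ℝ D (g x W - G)) μ := j1.add i2
    rw [integral_add j2 i3, integral_add j1 i2, integral_sub i0 i1,
      integral_const_mul, integral_const_mul, integral_const_mul, integral_inner (hgInt W),
      integral_inner hs, integral_sub (hgInt W) (integrable_const G), hUnbiased W, ← hG, hDD]
    simp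
  have h5 := mul_le_mul_of_nonneg_left (hNoise W) (show 0 ≤ L * α ^ 2 / 2 by positivity)
  refine (hle.trans_eq e).trans ?_
  linarith
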